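/- The inclusion P_k(Ē) ↪ L_k(E) is a flat epimorphic left ring of quotients: it is an epimorphism in the category of rings and L_k(E) is flat as a right P_k(Ē)-module. (In fact, the inclusion is the universal Σ₂-inverting homomorphism, where Σ₂ = {ν_i : i ∈ E^0 not a sink}.) -/

import Mathlib

namespace LPA

/-- A finite quiver: finite sets of vertices and arrows with source and target maps. -/
structure FinQuiver : Type 1 where
  V : Type
  A : Type
  [fintypeV : Fintype V]
  [decEqV : DecidableEq V]
  [fintypeA : Fintype A]
  [decEqA : DecidableEq A]
  src : A → V
  tgt : A → V

attribute [instance] FinQuiver.fintypeV FinQuiver.decEqV FinQuiver.fintypeA FinQuiver.decEqA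

/-- The inverse quiver: all arrows reversed. -/
def FinQuiver.rev (Q : FinQuiver) : FinQuiver where
  V := Q.V
  A := Q.A
  fintypeV := Q.fintypeV
  decEqV := Q.decEqV
  fintypeA := Q.fintypeA
  decEqA := Q.decEqA
  src := Q.tgt
  tgt := Q.src

/-- Generators of the path algebra: a trivial path `p v` for each vertex and an arrow `e` for
each arrow. -/
inductive PathGen (Q : FinQuiver) : Type
  | vertex (v : Q.V) : PathGen Q
  | edge (e : Q.A) : PathGen Q

/-- Defining relations of the path algebra: the trivial paths are pairwise orthogonal
idempotents summing to `1`, and `p (src e) * e = e = e * p (tgt e)`. -/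
inductive PathRel (k : Type) [CommRing k] (Q : FinQuiver) :
    FreeAlgebra k (PathGen Q) → FreeAlgebra k (PathGen Q) → Prop
  | vertex_mul_self (v : Q.V) :
      PathRel k Q (FreeAlgebra.ι k (PathGen.vertex v) * FreeAlgebra.ι k (PathGen.vertex v))
        (FreeAlgebra.ι k (PathGen.vertex v))
  | vertex_mul_ne (v w : Q.V) (h : v ≠ w) :
      PathRel k Q (FreeAlgebra.ι k (PathGen.vertex v) * FreeAlgebra.ι k (PathGen.vertex w)) 0
  | sum_vertex :
      PathRel k Q (∑ v : Q.V, FreeAlgebra.ι k (PathGen.vertex v)) 1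
  | src_mul (e : Q.A) :
      PathRel k Q
        (FreeAlgebra.ι k (PathGen.vertex (Q.src e)) * FreeAlgebra.ι k (PathGen.edge e))
        (FreeAlgebra.ι k (PathGen.edge e))
  | mul_tgt (e : Q.A) :
      PathRel k Q
        (FreeAlgebra.ι k (PathGen.edge e) * FreeAlgebra.ι k (PathGen.vertex (Q.tgt e)))
        (FreeAlgebra.ι k (PathGen.edge e))

/-- The path algebra `P_k(Q)` of a finite quiver `Q`, presented by generators and relations. -/
def PathAlg (k : Type) [CommRing k] (Q : FinQuiver) : Type :=
  RingQuot (PathRel k Q)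

variable (k : Type) [CommRing k] (Q : FinQuiver)

noncomputable instance : Ring (PathAlg k Q) :=
  inferInstanceAs (Ring (RingQuot (PathRel k Q)))

noncomputable instance : Algebra k (PathAlg k Q) :=
  inferInstanceAs (Algebra k (RingQuot (PathRel k Q)))

/-- The quotient map from the free algebra onto the path algebra. -/
noncomputable def PathAlg.mk : FreeAlgebra k (PathGen Q) →ₐ[k] PathAlg k Q :=
  RingQuot.mkAlgHom k (PathRel k Q)

/-- The trivial path (vertex idempotent) `p v` in the path algebra. -/
noncomputable def PathAlg.p (v : Q.V) : PathAlg k Q :=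
  PathAlg.mk k Q (FreeAlgebra.ι k (PathGen.vertex v))

/-- The arrow `e` in the path algebra. -/
noncomputable def PathAlg.arrow (e : Q.A) : PathAlg k Q :=
  PathAlg.mk k Q (FreeAlgebra.ι k (PathGen.edge e))

theorem PathAlg.mk_rel {x y : FreeAlgebra k (PathGen Q)} (h : PathRel k Q x y) :
    PathAlg.mk k Q x = PathAlg.mk k Q y :=
  RingQuot.mkAlgHom_rel k h

theorem PathAlg.p_mul_self (v : Q.V) : PathAlg.p k Q v * PathAlg.p k Q v = PathAlg.p k Q v := by
  have h := PathAlg.mk_rel k Q (PathRel.vertex_mul_self v)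
  simpa [map_mul, PathAlg.p] using h

theorem PathAlg.p_mul_ne (v w : Q.V) (hvw : v ≠ w) :
    PathAlg.p k Q v * PathAlg.p k Q w = 0 := by
  have h := PathAlg.mk_rel k Q (PathRel.vertex_mul_ne v w hvw)
  simpa [map_mul, PathAlg.p] using h

theorem PathAlg.sum_p : (∑ v : Q.V, PathAlg.p k Q v) = 1 := by
  have h := PathAlg.mk_rel k Q (PathRel.sum_vertex)
  simpa [map_sum, PathAlg.p] using h

theorem PathAlg.arrow_mul_tgt (e : Q.A) :
    PathAlg.arrow k Q e * PathAlg.p k Q (Q.tgt e) = PathAlg.arrow k Q e := by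
  have h := PathAlg.mk_rel k Q (PathRel.mul_tgt e)
  simpa [map_mul, PathAlg.p, PathAlg.arrow] using h

theorem PathAlg.src_mul_arrow (e : Q.A) :
    PathAlg.p k Q (Q.src e) * PathAlg.arrow k Q e = PathAlg.arrow k Q e := by
  have h := PathAlg.mk_rel k Q (PathRel.src_mul e)
  simpa [map_mul, PathAlg.p, PathAlg.arrow] using h

/-- The set of vertices `{p v | v ∈ Q.V}` of the path algebra, as a finite set. -/
noncomputable def vertexFinset : Finset (PathAlg k Q) :=
  letI := Classical.decEq (PathAlg k Q)
  Finset.univ.image (PathAlg.p k Q)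

end LPA

namespace LPA

/-- Generators of the Leavitt path algebra: vertex idempotents, arrows, and ghost arrows. -/
inductive LGen (Q : FinQuiver) : Type
  | vertex (v : Q.V) : LGen Q
  | edge (e : Q.A) : LGen Q
  | ghost (e : Q.A) : LGen Q

/-- Defining relations of the Leavitt path algebra `L_k(E)`: (V), (E1), (E2), (CK1), (CK2),
together with `∑ p_v = 1`. -/
inductive LeavittRel (k : Type) [CommRing k] (Q : FinQuiver) :
    FreeAlgebra k (LGen Q) → FreeAlgebra k (LGen Q) → Prop
  | vertex_mul_self (v : Q.V) :
      LeavittRel k Q (FreeAlgebra.ι k (LGen.vertex v) * FreeAlgebra.ι k (LGen.vertex v))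
        (FreeAlgebra.ι k (LGen.vertex v))
  | vertex_mul_ne (v w : Q.V) (h : v ≠ w) :
      LeavittRel k Q (FreeAlgebra.ι k (LGen.vertex v) * FreeAlgebra.ι k (LGen.vertex w)) 0
  | sum_vertex :
      LeavittRel k Q (∑ v : Q.V, FreeAlgebra.ι k (LGen.vertex v)) 1
  | src_mul (e : Q.A) :
      LeavittRel k Q (FreeAlgebra.ι k (LGen.vertex (Q.src e)) * FreeAlgebra.ι k (LGen.edge e))
        (FreeAlgebra.ι k (LGen.edge e))
  | mul_tgt (e : Q.A) :
      LeavittRel k Q (FreeAlgebra.ι k (LGen.edge e) * FreeAlgebra.ι k (LGen.vertex (Q.tgt e)))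
        (FreeAlgebra.ι k (LGen.edge e))
  | tgt_mul_ghost (e : Q.A) :
      LeavittRel k Q (FreeAlgebra.ι k (LGen.vertex (Q.tgt e)) * FreeAlgebra.ι k (LGen.ghost e))
        (FreeAlgebra.ι k (LGen.ghost e))
  | ghost_mul_src (e : Q.A) :
      LeavittRel k Q (FreeAlgebra.ι k (LGen.ghost e) * FreeAlgebra.ι k (LGen.vertex (Q.src e)))
        (FreeAlgebra.ι k (LGen.ghost e))
  | ghost_mul_edge_self (e : Q.A) :
      LeavittRel k Q (FreeAlgebra.ι k (LGen.ghost e) * FreeAlgebra.ι k (LGen.edge e))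
        (FreeAlgebra.ι k (LGen.vertex (Q.tgt e)))
  | ghost_mul_edge_ne (e f : Q.A) (h : e ≠ f) :
      LeavittRel k Q (FreeAlgebra.ι k (LGen.ghost e) * FreeAlgebra.ι k (LGen.edge f)) 0
  | cuntz_krieger (v : Q.V) (h : ∃ e : Q.A, Q.src e = v) :
      LeavittRel k Q
        (∑ e ∈ Finset.univ.filter (fun e : Q.A => Q.src e = v),
          FreeAlgebra.ι k (LGen.edge e) * FreeAlgebra.ι k (LGen.ghost e))
        (FreeAlgebra.ι k (LGen.vertex v))

/-- The Leavitt path algebra `L_k(E)`. -/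
def Leavitt (k : Type) [CommRing k] (Q : FinQuiver) : Type :=
  RingQuot (LeavittRel k Q)

variable (k : Type) [CommRing k] (Q : FinQuiver)

noncomputable instance : Ring (Leavitt k Q) :=
  inferInstanceAs (Ring (RingQuot (LeavittRel k Q)))

noncomputable instance : Algebra k (Leavitt k Q) :=
  inferInstanceAs (Algebra k (RingQuot (LeavittRel k Q)))

/-- The quotient map from the free algebra onto the Leavitt path algebra. -/
noncomputable def Leavitt.mk : FreeAlgebra k (LGen Q) →ₐ[k] Leavitt k Q :=
  RingQuot.mkAlgHom k (LeavittRel k Q)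

/-- The vertex idempotent `p v` in the Leavitt path algebra. -/
noncomputable def Leavitt.p (v : Q.V) : Leavitt k Q :=
  Leavitt.mk k Q (FreeAlgebra.ι k (LGen.vertex v))

/-- The arrow `e` in the Leavitt path algebra. -/
noncomputable def Leavitt.ed (e : Q.A) : Leavitt k Q :=
  Leavitt.mk k Q (FreeAlgebra.ι k (LGen.edge e))

/-- The ghost arrow `ē` in the Leavitt path algebra. -/
noncomputable def Leavitt.gh (e : Q.A) : Leavitt k Q :=
  Leavitt.mk k Q (FreeAlgebra.ι k (LGen.ghost e))

theorem Leavitt.mk_rel {x y : FreeAlgebra k (LGen Q)} (h : LeavittRel k Q x y) :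
    Leavitt.mk k Q x = Leavitt.mk k Q y :=
  RingQuot.mkAlgHom_rel k h

theorem Leavitt.p_mul_self (v : Q.V) : Leavitt.p k Q v * Leavitt.p k Q v = Leavitt.p k Q v := by
  have h := Leavitt.mk_rel k Q (LeavittRel.vertex_mul_self v)
  simpa [map_mul, Leavitt.p] using h

theorem Leavitt.p_mul_ne (v w : Q.V) (hvw : v ≠ w) :
    Leavitt.p k Q v * Leavitt.p k Q w = 0 := by
  have h := Leavitt.mk_rel k Q (LeavittRel.vertex_mul_ne v w hvw)
  simpa [map_mul, Leavitt.p] using h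

theorem Leavitt.sum_p : (∑ v : Q.V, Leavitt.p k Q v) = 1 := by
  have h := Leavitt.mk_rel k Q (LeavittRel.sum_vertex)
  simpa [map_sum, Leavitt.p] using h

theorem Leavitt.tgt_mul_gh (e : Q.A) :
    Leavitt.p k Q (Q.tgt e) * Leavitt.gh k Q e = Leavitt.gh k Q e := by
  have h := Leavitt.mk_rel k Q (LeavittRel.tgt_mul_ghost e)
  simpa [map_mul, Leavitt.p, Leavitt.gh] using h

theorem Leavitt.gh_mul_src (e : Q.A) :
    Leavitt.gh k Q e * Leavitt.p k Q (Q.src e) = Leavitt.gh k Q e := by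
  have h := Leavitt.mk_rel k Q (LeavittRel.ghost_mul_src e)
  simpa [map_mul, Leavitt.p, Leavitt.gh] using h

/-- The canonical embedding `P_k(Ē) → L_k(E)` of the path algebra of the inverse quiver into
the Leavitt path algebra, sending `p v ↦ p v` and each reversed arrow `ē ↦ ē`. -/
noncomputable def revToLeavitt : PathAlg k Q.rev →ₐ[k] Leavitt k Q :=
  RingQuot.liftAlgHom k ⟨((FreeAlgebra.lift k fun g =>
    match g with
    | PathGen.vertex v => Leavitt.p k Q v
    | PathGen.edge e => Leavitt.gh k Q e : FreeAlgebra k (PathGen Q.rev) →ₐ[k] Leavitt k Q)), by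
      intro x y h
      induction h with
      | vertex_mul_self v =>
          simp only [map_mul, FreeAlgebra.lift_ι_apply]
          exact Leavitt.p_mul_self k Q v
      | vertex_mul_ne v w h =>
          simp only [map_mul, map_zero, FreeAlgebra.lift_ι_apply]
          exact Leavitt.p_mul_ne k Q v w h
      | sum_vertex =>
          simp only [map_sum, map_one, FreeAlgebra.lift_ι_apply]
          exact Leavitt.sum_p k Q
      | src_mul e =>
          simp only [map_mul, FreeAlgebra.lift_ι_apply]
          exact Leavitt.tgt_mul_gh k Q e
      | mul_tgt e =>
          simp only [map_mul, FreeAlgebra.lift_ι_apply]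
          exact Leavitt.gh_mul_src k Q e⟩

/-- The canonical embedding `P_k(E) → L_k(E)` of the path algebra into the Leavitt path
algebra, sending `p v ↦ p v` and each arrow `e ↦ e`. -/
noncomputable def pathToLeavitt : PathAlg k Q →ₐ[k] Leavitt k Q :=
  RingQuot.liftAlgHom k ⟨((FreeAlgebra.lift k fun g =>
    match g with
    | PathGen.vertex v => Leavitt.p k Q v
    | PathGen.edge e => Leavitt.ed k Q e : FreeAlgebra k (PathGen Q) →ₐ[k] Leavitt k Q)), by
      intro x y h
      induction h with
      | vertex_mul_self v =>
          simp only [map_mul, FreeAlgebra.lift_ι_apply]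
          exact Leavitt.p_mul_self k Q v
      | vertex_mul_ne v w h =>
          simp only [map_mul, map_zero, FreeAlgebra.lift_ι_apply]
          exact Leavitt.p_mul_ne k Q v w h
      | sum_vertex =>
          simp only [map_sum, map_one, FreeAlgebra.lift_ι_apply]
          exact Leavitt.sum_p k Q
      | src_mul e =>
          simp only [map_mul, FreeAlgebra.lift_ι_apply]
          have h := Leavitt.mk_rel k Q (LeavittRel.src_mul e)
          simpa [map_mul, Leavitt.p, Leavitt.ed] using h
      | mul_tgt e =>
          simp only [map_mul, FreeAlgebra.lift_ι_apply]
          have h := Leavitt.mk_rel k Q (LeavittRel.mul_tgt e)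
          simpa [map_mul, Leavitt.p, Leavitt.ed] using h⟩

end LPA

namespace LPA

open TensorProduct

variable (P L : Type) [Ring P] [Ring L] (φ : P →+* L)

/-- The subgroup of relations defining the balanced tensor product `L ⊗_P M` (where `L` is a
right `P`-module via `φ` and `M` a left `P`-module) as a quotient of `L ⊗_ℤ M`. -/
noncomputable def trel (M : Type) [AddCommGroup M] [Module P M] :
    Submodule L (TensorProduct ℤ L M) :=
  Submodule.span L
    {z | ∃ (l : L) (p : P) (m : M), z = (l * φ p) ⊗ₜ[ℤ] m - l ⊗ₜ[ℤ] (p • m)}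

/-- The balanced tensor product `L ⊗_P M`, a left `L`-module. -/
abbrev TensorPhi (M : Type) [AddCommGroup M] [Module P M] : Type :=
  TensorProduct ℤ L M ⧸ trel P L φ M

/-- Functoriality of `L ⊗_P -` : the map induced on balanced tensor products by a `P`-linear
map `f : M → N`. -/
noncomputable def tmap {M N : Type} [AddCommGroup M] [Module P M] [AddCommGroup N]
    [Module P N] (f : M →ₗ[P] N) : TensorPhi P L φ M →ₗ[L] TensorPhi P L φ N :=
  Submodule.mapQ _ _
    (TensorProduct.AlgebraTensorModule.map (LinearMap.id : L →ₗ[L] L)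
      f.toAddMonoidHom.toIntLinearMap)
    (by
      refine Submodule.span_le.mpr ?_
      rintro z ⟨l, p, m, rfl⟩
      simp only [SetLike.mem_coe, Submodule.mem_comap, map_sub,
        TensorProduct.AlgebraTensorModule.map_tmul, LinearMap.id_coe, id_eq,
        AddMonoidHom.coe_toIntLinearMap, LinearMap.toAddMonoidHom_coe]
      exact Submodule.subset_span ⟨l, p, f m, by rw [f.map_smul]⟩)

/-- `L` is flat as a right `P`-module (via `φ : P → L`): the functor `L ⊗_P -` preserves
injectivity. -/
def RightFlat : Prop :=
  ∀ (M N : Type) [AddCommGroup M] [Module P M] [AddCommGroup N] [Module P N],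
    ∀ f : M →ₗ[P] N, Function.Injective f → Function.Injective (tmap P L φ f)

end LPA

namespace LPA

section Aux

variable (k : Type) [CommRing k] (Q : FinQuiver)

/-- Vertices of the inverse quiver algebra. -/
noncomputable def rp (v : Q.V) : PathAlg k Q.rev := PathAlg.p k Q.rev v

/-- Arrows of the inverse quiver algebra. -/
noncomputable def ra (e : Q.A) : PathAlg k Q.rev := PathAlg.arrow k Q.rev e

theorem rp_self (v : Q.V) : rp k Q v * rp k Q v = rp k Q v := PathAlg.p_mul_self k Q.rev v

theorem rp_ne (v w : Q.V) (h : v ≠ w) : rp k Q v * rp k Q w = 0 :=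
  PathAlg.p_mul_ne k Q.rev v w h

theorem ra_src (e : Q.A) : ra k Q e * rp k Q (Q.src e) = ra k Q e :=
  PathAlg.arrow_mul_tgt k Q.rev e

theorem tgt_ra (e : Q.A) : rp k Q (Q.tgt e) * ra k Q e = ra k Q e :=
  PathAlg.src_mul_arrow k Q.rev e

/-- Product of ghosts along a word. -/
noncomputable def gw : List Q.A → Leavitt k Q
  | [] => 1
  | e :: w => gw w * Leavitt.gh k Q e

/-- Product of reversed arrows along a word. -/
noncomputable def pw : List Q.A → PathAlg k Q.rev
  | [] => 1
  | e :: w => pw w * ra k Q e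

/-- Source of a word ending at `v`. -/
def wsrc : List Q.A → Q.V → Q.V
  | [], v => v
  | e :: _, _ => Q.src e

/-- The word is a path ending at `v`. -/
def IsP : List Q.A → Q.V → Prop
  | [], _ => True
  | e :: w, v => wsrc Q w v = Q.tgt e ∧ IsP w v

/-- Long words and words ending at a sink. -/
def Good (n : ℕ) (w : List Q.A) (v : Q.V) : Prop :=
  n ≤ w.length ∨ ¬ ∃ e : Q.A, Q.src e = v

theorem rev_p (v : Q.V) : revToLeavitt k Q (rp k Q v) = Leavitt.p k Q v := by
  unfold revToLeavitt rp PathAlg.p PathAlg.mk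
  erw [RingQuot.liftAlgHom_mkAlgHom_apply]
  simp

theorem rev_arrow (e : Q.A) :
    revToLeavitt k Q (ra k Q e) = Leavitt.gh k Q e := by
  unfold revToLeavitt ra PathAlg.arrow PathAlg.mk
  erw [RingQuot.liftAlgHom_mkAlgHom_apply]
  simp

theorem rev_pw (w : List Q.A) : revToLeavitt k Q (pw k Q w) = gw k Q w := by
  induction w with
  | nil => simp [pw, gw]
  | cons e w ih => rw [pw, gw, map_mul, ih, rev_arrow]

theorem L_src_mul (e : Q.A) :
    Leavitt.p k Q (Q.src e) * Leavitt.ed k Q e = Leavitt.ed k Q e := by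
  have h := Leavitt.mk_rel k Q (LeavittRel.src_mul e)
  simpa [map_mul, Leavitt.p, Leavitt.ed] using h

theorem L_mul_tgt (e : Q.A) :
    Leavitt.ed k Q e * Leavitt.p k Q (Q.tgt e) = Leavitt.ed k Q e := by
  have h := Leavitt.mk_rel k Q (LeavittRel.mul_tgt e)
  simpa [map_mul, Leavitt.p, Leavitt.ed] using h

theorem L_gh_ed (e : Q.A) :
    Leavitt.gh k Q e * Leavitt.ed k Q e = Leavitt.p k Q (Q.tgt e) := by
  have h := Leavitt.mk_rel k Q (LeavittRel.ghost_mul_edge_self e)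
  simpa [map_mul, Leavitt.p, Leavitt.ed, Leavitt.gh] using h

theorem L_gh_ed_ne (e f : Q.A) (hef : e ≠ f) :
    Leavitt.gh k Q e * Leavitt.ed k Q f = 0 := by
  have h := Leavitt.mk_rel k Q (LeavittRel.ghost_mul_edge_ne e f hef)
  simpa [map_mul, Leavitt.p, Leavitt.ed, Leavitt.gh] using h

theorem L_ck (v : Q.V) (h : ∃ e : Q.A, Q.src e = v) :
    ∑ e ∈ Finset.univ.filter (fun e : Q.A => Q.src e = v),
      Leavitt.ed k Q e * Leavitt.gh k Q e = Leavitt.p k Q v := by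
  have h := Leavitt.mk_rel k Q (LeavittRel.cuntz_krieger v h)
  simpa [map_mul, map_sum, Leavitt.p, Leavitt.ed, Leavitt.gh] using h

theorem L_induction {C : Leavitt k Q → Prop}
    (hs : ∀ c : k, C (algebraMap k _ c)) (hp : ∀ v, C (Leavitt.p k Q v))
    (he : ∀ e, C (Leavitt.ed k Q e)) (hg : ∀ e, C (Leavitt.gh k Q e))
    (hm : ∀ a b, C a → C b → C (a * b)) (ha : ∀ a b, C a → C b → C (a + b))
    (a : Leavitt k Q) : C a := by
  obtain ⟨x, rfl⟩ : ∃ x, Leavitt.mk k Q x = a := RingQuot.mkAlgHom_surjective k _ a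
  induction x using FreeAlgebra.induction with
  | grade0 c => rw [AlgHom.commutes]; exact hs c
  | grade1 g =>
    cases g with
    | vertex v => exact hp v
    | edge v => exact he v
    | ghost v => exact hg v
  | mul a b h1 h2 => rw [map_mul]; exact hm _ _ h1 h2
  | add a b h1 h2 => rw [map_add]; exact ha _ _ h1 h2

theorem P_induction {C : PathAlg k Q.rev → Prop}
    (hs : ∀ c : k, C (algebraMap k _ c)) (hp : ∀ v, C (rp k Q v))
    (he : ∀ e, C (ra k Q e))
    (hm : ∀ a b, C a → C b → C (a * b)) (ha : ∀ a b, C a → C b → C (a + b))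
    (a : PathAlg k Q.rev) : C a := by
  obtain ⟨x, rfl⟩ : ∃ x, PathAlg.mk k Q.rev x = a := RingQuot.mkAlgHom_surjective k _ a
  induction x using FreeAlgebra.induction with
  | grade0 c => rw [AlgHom.commutes]; exact hs c
  | grade1 g =>
    cases g with
    | vertex v => exact hp v
    | edge v => exact he v
  | mul a b h1 h2 => rw [map_mul]; exact hm _ _ h1 h2
  | add a b h1 h2 => rw [map_add]; exact ha _ _ h1 h2

/-- Epimorphism. -/
theorem epi_aux (T : Type) [Ring T] (g₁ g₂ : Leavitt k Q →+* T)
    (h : g₁.comp (revToLeavitt k Q).toRingHom = g₂.comp (revToLeavitt k Q).toRingHom) :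
    g₁ = g₂ := by
  have h' : ∀ x, g₁ (revToLeavitt k Q x) = g₂ (revToLeavitt k Q x) := fun x =>
    RingHom.congr_fun h x
  have hp : ∀ v, g₁ (Leavitt.p k Q v) = g₂ (Leavitt.p k Q v) := fun v => by
    rw [← rev_p, h']
  have hg : ∀ v, g₁ (Leavitt.gh k Q v) = g₂ (Leavitt.gh k Q v) := fun v => by
    rw [← rev_arrow, h']
  ext a
  induction a using L_induction with
  | hs c => rw [← AlgHom.commutes (revToLeavitt k Q), h']
  | hp v => exact hp v
  | hg e => exact hg e
  | hm a b h1 h2 => rw [map_mul, map_mul, h1, h2]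
  | ha a b h1 h2 => rw [map_add, map_add, h1, h2]
  | he e =>
    symm
    calc g₂ (Leavitt.ed k Q e)
        = g₁ (Leavitt.p k Q (Q.src e)) * g₂ (Leavitt.ed k Q e) := by
          rw [hp, ← map_mul, L_src_mul]
      _ = ∑ f ∈ Finset.univ.filter (fun f : Q.A => Q.src f = Q.src e),
            g₁ (Leavitt.ed k Q f) * g₂ (Leavitt.gh k Q f * Leavitt.ed k Q e) := by
          rw [← L_ck k Q (Q.src e) ⟨e, rfl⟩, map_sum, Finset.sum_mul]
          refine Finset.sum_congr rfl fun f _ => ?_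
          rw [map_mul, map_mul, hg, mul_assoc]
      _ = g₁ (Leavitt.ed k Q e) * g₂ (Leavitt.gh k Q e * Leavitt.ed k Q e) := by
          refine Finset.sum_eq_single e (fun f _ hf => ?_) (fun hn => ?_)
          · rw [L_gh_ed_ne k Q f e hf, map_zero, mul_zero]
          · simp at hn
      _ = g₁ (Leavitt.ed k Q e) := by
          rw [L_gh_ed, ← hp, ← map_mul, L_mul_tgt]

/-- Claim A. -/
theorem claimA (a : Leavitt k Q) : ∃ n, ∀ w v, Good Q n w v →
    ∃ x, Leavitt.p k Q v * gw k Q w * a = revToLeavitt k Q x := by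
  have key : ∀ a l : Leavitt k Q,
      (∃ n, ∀ w v, Good Q n w v →
        ∃ x, Leavitt.p k Q v * gw k Q w * l = revToLeavitt k Q x) →
      (∃ n, ∀ w v, Good Q n w v →
        ∃ x, Leavitt.p k Q v * gw k Q w * (a * l) = revToLeavitt k Q x) := by
    intro a
    induction a using L_induction with
    | hs c =>
      rintro l ⟨n, hn⟩
      refine ⟨n, fun w v h => ?_⟩
      obtain ⟨x, hx⟩ := hn w v h
      refine ⟨algebraMap k _ c * x, ?_⟩
      rw [map_mul, ← hx, AlgHom.commutes, ← mul_assoc, ← Algebra.commutes c, mul_assoc]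
    | hp u =>
      rintro l ⟨n, hn⟩
      refine ⟨n, fun w v h => ?_⟩
      obtain ⟨x, hx⟩ := hn w v h
      cases w with
      | nil =>
        by_cases huv : v = u
        · subst huv
          refine ⟨x, ?_⟩
          rw [← hx, gw, mul_one, ← mul_assoc, Leavitt.p_mul_self]
        · refine ⟨0, ?_⟩
          rw [gw, mul_one, ← mul_assoc, Leavitt.p_mul_ne k Q v u huv, zero_mul, map_zero]
      | cons f w =>
        by_cases huv : Q.src f = u
        · subst huv
          refine ⟨x, ?_⟩
          rw [← hx, gw, ← mul_assoc]
          congr 1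
          rw [mul_assoc, mul_assoc, Leavitt.gh_mul_src]
        · refine ⟨0, ?_⟩
          rw [gw, ← Leavitt.gh_mul_src]
          simp only [mul_assoc]
          rw [← mul_assoc (Leavitt.p k Q (Q.src f)), Leavitt.p_mul_ne k Q _ u huv]
          simp
    | he e =>
      rintro l ⟨n, hn⟩
      refine ⟨n + 1, fun w v h => ?_⟩
      cases w with
      | nil =>
        refine ⟨0, ?_⟩
        have hv : ¬ ∃ e : Q.A, Q.src e = v := h.resolve_left (by simp)
        rw [gw, mul_one, ← mul_assoc, ← L_src_mul, ← mul_assoc,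
          Leavitt.p_mul_ne k Q v (Q.src e) (fun h => hv ⟨e, h.symm⟩)]
        simp
      | cons f w =>
        by_cases hef : f = e
        · subst hef
          have h2 : Good Q n w v := h.imp (fun h => by simpa using h) id
          have h3 : ∃ x, Leavitt.p k Q v * gw k Q w * (Leavitt.p k Q (Q.tgt f) * l) =
              revToLeavitt k Q x := by
            obtain ⟨x, hx⟩ := hn w v h2
            cases w with
            | nil =>
              by_cases huv : v = Q.tgt f
              · subst huv
                refine ⟨x, ?_⟩
                rw [← hx, gw, mul_one, ← mul_assoc, Leavitt.p_mul_self]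
              · refine ⟨0, ?_⟩
                rw [gw, mul_one, ← mul_assoc, Leavitt.p_mul_ne k Q v _ huv, zero_mul, map_zero]
            | cons g w =>
              by_cases huv : Q.src g = Q.tgt f
              · refine ⟨x, ?_⟩
                rw [← hx, gw, ← mul_assoc]
                congr 1
                rw [mul_assoc, mul_assoc, ← huv, Leavitt.gh_mul_src]
              · refine ⟨0, ?_⟩
                rw [gw, ← Leavitt.gh_mul_src]
                simp only [mul_assoc]
                rw [← mul_assoc (Leavitt.p k Q (Q.src g)), Leavitt.p_mul_ne k Q _ _ huv]
                simp
          obtain ⟨x, hx⟩ := h3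
          refine ⟨x, ?_⟩
          rw [← hx, gw, ← L_gh_ed]
          simp only [mul_assoc]
        · refine ⟨0, ?_⟩
          rw [gw]
          simp only [mul_assoc]
          rw [← mul_assoc (Leavitt.gh k Q f), L_gh_ed_ne k Q f e hef]
          simp
    | hg e =>
      rintro l ⟨n, hn⟩
      refine ⟨n, fun w v h => ?_⟩
      obtain ⟨x, hx⟩ := hn (e :: w) v (h.imp (fun h => by simp; omega) id)
      refine ⟨x, ?_⟩
      rw [← hx, gw]
      simp only [mul_assoc]
    | hm a b h1 h2 =>
      intro l hl
      simpa only [mul_assoc] using h1 _ (h2 l hl)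
    | ha a b h1 h2 =>
      intro l hl
      obtain ⟨n, hn⟩ := h1 l hl
      obtain ⟨m, hm⟩ := h2 l hl
      refine ⟨max n m, fun w v h => ?_⟩
      obtain ⟨x, hx⟩ := hn w v (h.imp (fun h => le_trans (le_max_left _ _) h) id)
      obtain ⟨y, hy⟩ := hm w v (h.imp (fun h => le_trans (le_max_right _ _) h) id)
      refine ⟨x + y, ?_⟩
      rw [map_add, ← hx, ← hy, add_mul, mul_add]
  have := key a 1 ⟨0, fun w v _ => ⟨rp k Q v * pw k Q w, by
    rw [map_mul, rev_p, rev_pw, mul_one]⟩⟩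
  simpa using this

/-- Claim B. -/
theorem claimB (M : Type) [AddCommGroup M] [Module (Leavitt k Q) M] (n : ℕ) : ∀ (x : M)
    (_ : ∀ w v, Good Q n w v → (Leavitt.p k Q v * gw k Q w) • x = 0), x = 0 := by
  induction n with
  | zero =>
    intro x h
    rw [← one_smul (Leavitt k Q) x, ← Leavitt.sum_p, Finset.sum_smul]
    refine Finset.sum_eq_zero fun v _ => ?_
    simpa [gw] using h [] v (Or.inl (by simp))
  | succ n ih =>
    intro x h
    have hg : ∀ e, Leavitt.gh k Q e • x = 0 := fun e => ih _ fun w v hw => by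
      rw [← mul_smul, mul_assoc]
      exact h (e :: w) v (hw.imp (fun h => by simpa using h) id)
    rw [← one_smul (Leavitt k Q) x, ← Leavitt.sum_p, Finset.sum_smul]
    refine Finset.sum_eq_zero fun v _ => ?_
    by_cases hv : ∃ e : Q.A, Q.src e = v
    · rw [← L_ck k Q v hv, Finset.sum_smul]
      exact Finset.sum_eq_zero fun e _ => by rw [mul_smul, hg, smul_zero]
    · simpa [gw] using h [] v (Or.inr hv)

theorem pw_p_ne (w : List Q.A) (v u : Q.V) (h : wsrc Q w v ≠ u) :
    rp k Q v * pw k Q w * rp k Q u = 0 := by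
  cases w with
  | nil => rw [pw, mul_one]; exact rp_ne k Q v u h
  | cons e w =>
    rw [pw, ← ra_src]
    simp only [mul_assoc]
    rw [rp_ne k Q (Q.src e) u h]
    simp

theorem pw_p_eq (w : List Q.A) (v : Q.V) :
    rp k Q v * pw k Q w * rp k Q (wsrc Q w v) =
      rp k Q v * pw k Q w := by
  cases w with
  | nil => rw [pw, mul_one]; exact rp_self k Q v
  | cons e w =>
    rw [pw, mul_assoc, mul_assoc]
    congr 2
    exact ra_src k Q e

theorem pw_cons_ne (w : List Q.A) (v : Q.V) (e : Q.A) (h : wsrc Q w v ≠ Q.tgt e) :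
    rp k Q v * pw k Q (e :: w) = 0 := by
  rw [pw, ← tgt_ra, ← mul_assoc, ← mul_assoc]
  have := pw_p_ne k Q w v (Q.tgt e) h
  erw [this]
  simp

theorem pw_not_isP (w : List Q.A) (v : Q.V) (h : ¬ IsP Q w v) :
    rp k Q v * pw k Q w = 0 := by
  induction w with
  | nil => exact absurd trivial h
  | cons e w ih =>
    by_cases h1 : wsrc Q w v = Q.tgt e
    · have h2 : ¬ IsP Q w v := fun h2 => h ⟨h1, h2⟩
      rw [pw, ← mul_assoc, ih h2, zero_mul]
    · exact pw_cons_ne k Q w v e h1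

end Aux

section Rep

variable (k : Type) [CommRing k] (Q : FinQuiver) (N : Type) [AddCommGroup N] [Module k N]

/-- The functions on words. -/
abbrev Fn : Type := List Q.A → Q.V → N

/-- Eventually vanishing functions. -/
def Kn : Submodule k (Fn Q N) where
  carrier := {g | ∃ n, ∀ w v, IsP Q w v → Good Q n w v → g w v = 0}
  zero_mem' := ⟨0, fun _ _ _ _ => rfl⟩
  add_mem' := by
    rintro a b ⟨n, hn⟩ ⟨m, hm⟩
    refine ⟨max n m, fun w v hw h => ?_⟩
    have h1 := hn w v hw (h.imp (fun h => le_trans (le_max_left _ _) h) id)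
    have h2 := hm w v hw (h.imp (fun h => le_trans (le_max_right _ _) h) id)
    simp [h1, h2]
  smul_mem' := by
    rintro c a ⟨n, hn⟩
    exact ⟨n, fun w v hw h => by simp [hn w v hw h]⟩

/-- Action of a vertex. -/
def opP (u : Q.V) : Fn Q N →ₗ[k] Fn Q N where
  toFun g := fun w v => if wsrc Q w v = u then g w v else 0
  map_add' a b := by
    funext w v
    simp only [Pi.add_apply]
    split_ifs <;> simp
  map_smul' c a := by
    funext w v
    simp only [Pi.smul_apply, RingHom.id_apply]
    split_ifs <;> simp

/-- Action of a ghost. -/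
def opG (e : Q.A) : Fn Q N →ₗ[k] Fn Q N where
  toFun g := fun w v => if wsrc Q w v = Q.tgt e then g (e :: w) v else 0
  map_add' a b := by
    funext w v
    simp only [Pi.add_apply]
    split_ifs <;> simp
  map_smul' c a := by
    funext w v
    simp only [Pi.smul_apply, RingHom.id_apply]
    split_ifs <;> simp

/-- The function underlying the action of an edge. -/
def opEfun (e : Q.A) (g : Fn Q N) : Fn Q N
  | [], _ => 0
  | f :: w, v => if f = e ∧ wsrc Q w v = Q.tgt e then g w v else 0

/-- Action of an edge. -/
def opE (e : Q.A) : Fn Q N →ₗ[k] Fn Q N where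
  toFun g := opEfun Q N e g
  map_add' a b := by
    funext w v
    cases w with
    | nil => simp [opEfun]
    | cons f w =>
      simp only [Pi.add_apply, opEfun]
      split_ifs <;> simp
  map_smul' c a := by
    funext w v
    cases w with
    | nil => simp [opEfun]
    | cons f w =>
      simp only [Pi.smul_apply, RingHom.id_apply, opEfun]
      split_ifs <;> simp

theorem opP_K (u : Q.V) : Kn k Q N ≤ (Kn k Q N).comap (opP k Q N u) := by
  rintro g ⟨n, hn⟩
  exact ⟨n, fun w v hw h => by simp [opP, hn w v hw h]⟩

theorem opG_K (e : Q.A) : Kn k Q N ≤ (Kn k Q N).comap (opG k Q N e) := by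
  rintro g ⟨n, hn⟩
  refine ⟨n, fun w v hw h => ?_⟩
  simp only [opG, LinearMap.coe_mk, AddHom.coe_mk]
  split_ifs with h1
  · exact hn _ _ ⟨h1, hw⟩ (h.imp (fun h => by simp; omega) id)
  · rfl

theorem opE_K (e : Q.A) : Kn k Q N ≤ (Kn k Q N).comap (opE k Q N e) := by
  rintro g ⟨n, hn⟩
  refine ⟨n + 1, fun w v hw h => ?_⟩
  simp only [opE, LinearMap.coe_mk, AddHom.coe_mk]
  cases w with
  | nil => rfl
  | cons f w =>
    simp only [opEfun]
    split_ifs with h1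
    · exact hn _ _ hw.2 (h.imp (fun h => by simpa using h) id)
    · rfl

/-- The quotient. -/
abbrev Xn : Type := Fn Q N ⧸ Kn k Q N

/-- Generators acting on the quotient. -/
def genAct : LGen Q → Module.End k (Xn k Q N)
  | LGen.vertex v => (Kn k Q N).mapQ (Kn k Q N) (opP k Q N v) (opP_K k Q N v)
  | LGen.edge e => (Kn k Q N).mapQ (Kn k Q N) (opE k Q N e) (opE_K k Q N e)
  | LGen.ghost e => (Kn k Q N).mapQ (Kn k Q N) (opG k Q N e) (opG_K k Q N e)

theorem genAct_rel {x y : FreeAlgebra k (LGen Q)} (h : LeavittRel k Q x y) :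
    FreeAlgebra.lift k (genAct k Q N) x = FreeAlgebra.lift k (genAct k Q N) y := by
  refine LinearMap.ext fun z => ?_
  obtain ⟨g, rfl⟩ := Submodule.Quotient.mk_surjective _ z
  induction h with
  | vertex_mul_self u =>
    simp only [map_mul, FreeAlgebra.lift_ι_apply, Module.End.mul_apply, genAct,
      Submodule.mapQ_apply]
    congr 1
    funext w v
    simp only [opP, LinearMap.coe_mk, AddHom.coe_mk]
    grind
  | vertex_mul_ne u u' hu =>
    simp only [map_mul, FreeAlgebra.lift_ι_apply, Module.End.mul_apply, genAct,
      Submodule.mapQ_apply, map_zero, LinearMap.zero_apply]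
    rw [← Submodule.Quotient.mk_zero]
    congr 1
    funext w v
    simp only [opP, LinearMap.coe_mk, AddHom.coe_mk, Pi.zero_apply]
    split_ifs with h1 h2
    · exact absurd (h1.symm.trans h2) hu
    · rfl
    · rfl
  | sum_vertex =>
    simp only [map_sum, FreeAlgebra.lift_ι_apply, LinearMap.sum_apply, genAct,
      Submodule.mapQ_apply, map_one, Module.End.one_apply]
    simp only [← Submodule.mkQ_apply]
    rw [← map_sum (Kn k Q N).mkQ]
    congr 1
    funext w v
    simp [opP]
  | src_mul e =>
    simp only [map_mul, FreeAlgebra.lift_ι_apply, Module.End.mul_apply, genAct,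
      Submodule.mapQ_apply]
    congr 1
    funext w v
    cases w with
    | nil => simp [opP, opE, opEfun]
    | cons f w =>
      simp only [opP, opE, opEfun, wsrc, LinearMap.coe_mk, AddHom.coe_mk]
      grind
  | mul_tgt e =>
    simp only [map_mul, FreeAlgebra.lift_ι_apply, Module.End.mul_apply, genAct,
      Submodule.mapQ_apply]
    congr 1
    funext w v
    cases w with
    | nil => simp [opP, opE, opEfun]
    | cons f w =>
      simp only [opP, opE, opEfun, wsrc, LinearMap.coe_mk, AddHom.coe_mk]
      grind
  | tgt_mul_ghost e =>
    simp only [map_mul, FreeAlgebra.lift_ι_apply, Module.End.mul_apply, genAct,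
      Submodule.mapQ_apply]
    congr 1
    funext w v
    simp only [opP, opG, LinearMap.coe_mk, AddHom.coe_mk]
    grind
  | ghost_mul_src e =>
    simp only [map_mul, FreeAlgebra.lift_ι_apply, Module.End.mul_apply, genAct,
      Submodule.mapQ_apply]
    congr 1
    funext w v
    have hs : wsrc Q (e :: w) v = Q.src e := rfl
    simp only [opP, opG, LinearMap.coe_mk, AddHom.coe_mk]
    grind
  | ghost_mul_edge_self e =>
    simp only [map_mul, FreeAlgebra.lift_ι_apply, Module.End.mul_apply, genAct,
      Submodule.mapQ_apply]
    congr 1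
    funext w v
    simp only [opP, opE, opG, opEfun, LinearMap.coe_mk, AddHom.coe_mk]
    grind
  | ghost_mul_edge_ne e f hef =>
    simp only [map_mul, FreeAlgebra.lift_ι_apply, Module.End.mul_apply, genAct,
      Submodule.mapQ_apply, map_zero, LinearMap.zero_apply]
    rw [← Submodule.Quotient.mk_zero]
    congr 1
    funext w v
    simp only [opE, opG, opEfun, LinearMap.coe_mk, AddHom.coe_mk, Pi.zero_apply]
    grind
  | cuntz_krieger u hu =>
    simp only [map_mul, map_sum, FreeAlgebra.lift_ι_apply, Module.End.mul_apply, genAct,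
      Submodule.mapQ_apply, LinearMap.sum_apply]
    simp only [← Submodule.mkQ_apply]
    rw [← map_sum (Kn k Q N).mkQ]
    simp only [Submodule.mkQ_apply]
    rw [Submodule.Quotient.eq]
    refine ⟨1, fun w v hw h => ?_⟩
    cases w with
    | nil =>
      have hv : ¬ ∃ e : Q.A, Q.src e = v := h.resolve_left (by simp)
      have hvu : v ≠ u := fun h => hv (h ▸ hu)
      simp [opP, opE, opEfun, wsrc, hvu]
    | cons f w =>
      have hw1 := hw.1
      simp only [Pi.sub_apply, Finset.sum_apply, opP, opE, opEfun, opG, LinearMap.coe_mk,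
        AddHom.coe_mk]
      rw [sub_eq_zero, Finset.sum_filter, Finset.sum_eq_single f]
      · have hs : wsrc Q (f :: w) v = Q.src f := rfl
        simp [hw1, hs]
      · intro b _ hb
        simp [hb.symm]
      · simp

/-- The representation. -/
noncomputable def rho : Leavitt k Q →ₐ[k] Module.End k (Xn k Q N) :=
  RingQuot.liftAlgHom k ⟨FreeAlgebra.lift k (genAct k Q N), fun _ _ h => genAct_rel k Q N h⟩

theorem rho_p (v : Q.V) : rho k Q N (Leavitt.p k Q v) = genAct k Q N (LGen.vertex v) := by
  unfold rho Leavitt.p Leavitt.mk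
  erw [RingQuot.liftAlgHom_mkAlgHom_apply]
  simp

theorem rho_gh (e : Q.A) : rho k Q N (Leavitt.gh k Q e) = genAct k Q N (LGen.ghost e) := by
  unfold rho Leavitt.gh Leavitt.mk
  erw [RingQuot.liftAlgHom_mkAlgHom_apply]
  simp

variable [Module (PathAlg k Q.rev) N] [IsScalarTower k (PathAlg k Q.rev) N]

/-- The map from the module to the quotient. -/
noncomputable def iot : N →+ Xn k Q N :=
  (Kn k Q N).mkQ.toAddMonoidHom.comp
    { toFun := fun m w v => (rp k Q v * pw k Q w) • m
      map_zero' := by funext w v; simp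
      map_add' := fun a b => by funext w v; simp }

theorem rho_iot (x : PathAlg k Q.rev) : ∀ m : N,
    rho k Q N (revToLeavitt k Q x) (iot k Q N m) = iot k Q N (x • m) := by
  induction x using P_induction with
  | hs c =>
    intro m
    rw [AlgHom.commutes, AlgHom.commutes, Module.algebraMap_end_apply, algebraMap_smul]
    simp only [iot, AddMonoidHom.comp_apply, LinearMap.toAddMonoidHom_coe]
    rw [← map_smul]
    congr 1
    funext w v
    simp only [AddMonoidHom.coe_mk, ZeroHom.coe_mk, Pi.smul_apply]
    rw [← algebraMap_smul (PathAlg k Q.rev) c, ← algebraMap_smul (PathAlg k Q.rev) c m,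
      ← mul_smul, ← mul_smul, Algebra.commutes]
  | hp u =>
    intro m
    rw [rev_p]
    rw [rho_p]
    simp only [iot, AddMonoidHom.comp_apply, LinearMap.toAddMonoidHom_coe, genAct,
      Submodule.mkQ_apply, Submodule.mapQ_apply]
    congr 1
    funext w v
    simp only [opP, LinearMap.coe_mk, AddHom.coe_mk, AddMonoidHom.coe_mk, ZeroHom.coe_mk]
    rw [← mul_smul]
    split_ifs with h
    · subst h
      rw [pw_p_eq]
    · rw [pw_p_ne k Q w v u h]
      simp
  | he e =>
    intro m
    rw [rev_arrow]
    rw [rho_gh]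
    simp only [iot, AddMonoidHom.comp_apply, LinearMap.toAddMonoidHom_coe, genAct,
      Submodule.mkQ_apply, Submodule.mapQ_apply]
    congr 1
    funext w v
    simp only [opG, LinearMap.coe_mk, AddHom.coe_mk, AddMonoidHom.coe_mk, ZeroHom.coe_mk]
    rw [← mul_smul]
    split_ifs with h
    · rw [pw, mul_assoc]
    · have := pw_cons_ne k Q w v e h
      rw [pw, ← mul_assoc] at this
      rw [this, zero_smul]
  | hm a b h1 h2 =>
    intro m
    rw [map_mul, map_mul, Module.End.mul_apply, h2, h1, mul_smul]
  | ha a b h1 h2 =>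
    intro m
    rw [map_add, map_add, LinearMap.add_apply, h1, h2, add_smul, map_add]

open TensorProduct

/-- Evaluation on the tensor product. -/
noncomputable def jmap : TensorProduct ℤ (Leavitt k Q) N →+ Xn k Q N :=
  TensorProduct.liftAddHom
    { toFun := fun l => (rho k Q N l).toAddMonoidHom.comp (iot k Q N)
      map_zero' := by ext; simp
      map_add' := fun a b => by ext; simp }
    (by intro r a m; simp)

theorem jmap_tmul (l : Leavitt k Q) (m : N) :
    jmap k Q N (l ⊗ₜ[ℤ] m) = rho k Q N l (iot k Q N m) := rfl

theorem jmap_trel (z : TensorProduct ℤ (Leavitt k Q) N)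
    (hz : z ∈ trel (PathAlg k Q.rev) (Leavitt k Q) (revToLeavitt k Q).toRingHom N) :
    ∀ l : Leavitt k Q, jmap k Q N (l • z) = 0 := by
  unfold trel at hz
  induction hz using Submodule.span_induction with
  | mem x hx =>
    obtain ⟨l, p, m, rfl⟩ := hx
    intro l'
    rw [smul_sub, TensorProduct.smul_tmul', TensorProduct.smul_tmul', map_sub, jmap_tmul,
      jmap_tmul, smul_eq_mul, smul_eq_mul, ← mul_assoc, map_mul, Module.End.mul_apply]
    erw [rho_iot]
    exact sub_self _
  | zero => intro l; rw [smul_zero, map_zero]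
  | add x y _ _ h1 h2 => intro l; rw [smul_add, map_add, h1, h2, add_zero]
  | smul a x _ h => intro l; rw [← mul_smul]; exact h _

/-- Claim C. -/
theorem claimC (m : N)
    (hm : (1 : Leavitt k Q) ⊗ₜ[ℤ] m ∈
      trel (PathAlg k Q.rev) (Leavitt k Q) (revToLeavitt k Q).toRingHom N) :
    ∃ n, ∀ w v, Good Q n w v → (rp k Q v * pw k Q w) • m = 0 := by
  have h := jmap_trel k Q N _ hm 1
  rw [one_smul, jmap_tmul, map_one, Module.End.one_apply] at h
  simp only [iot, AddMonoidHom.comp_apply, LinearMap.toAddMonoidHom_coe, Submodule.mkQ_apply] at h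
  rw [Submodule.Quotient.mk_eq_zero] at h
  obtain ⟨n, hn⟩ := h
  refine ⟨n, fun w v hw => ?_⟩
  by_cases hp : IsP Q w v
  · exact hn w v hp hw
  · rw [pw_not_isP k Q w v hp, zero_smul]

end Rep

section Flat

open TensorProduct

variable (k : Type) [CommRing k] (Q : FinQuiver)

/-- Elementary tensors in the balanced tensor product. -/
noncomputable def tm (M : Type) [AddCommGroup M] [Module (PathAlg k Q.rev) M]
    (l : Leavitt k Q) (m : M) :
    TensorPhi (PathAlg k Q.rev) (Leavitt k Q) (revToLeavitt k Q).toRingHom M :=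
  Submodule.Quotient.mk (l ⊗ₜ[ℤ] m)

variable (M : Type) [AddCommGroup M] [Module (PathAlg k Q.rev) M]

theorem tm_smul (a l : Leavitt k Q) (m : M) : a • tm k Q M l m = tm k Q M (a * l) m := rfl

theorem tm_bal (x : PathAlg k Q.rev) (m : M) :
    tm k Q M (revToLeavitt k Q x) m = tm k Q M 1 (x • m) := by
  unfold tm
  rw [Submodule.Quotient.eq]
  exact Submodule.subset_span ⟨1, x, m, by rw [one_mul]; rfl⟩

theorem tm_zero (l : Leavitt k Q) : tm k Q M l 0 = 0 := by
  unfold tm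
  rw [TensorProduct.tmul_zero, Submodule.Quotient.mk_zero]

theorem tm_add (l : Leavitt k Q) (m m' : M) :
    tm k Q M l (m + m') = tm k Q M l m + tm k Q M l m' := by
  unfold tm
  rw [TensorProduct.tmul_add, Submodule.Quotient.mk_add]

theorem tm_claimA (x : TensorPhi (PathAlg k Q.rev) (Leavitt k Q)
    (revToLeavitt k Q).toRingHom M) : ∃ n, ∀ w v, Good Q n w v →
    ∃ m, (Leavitt.p k Q v * gw k Q w) • x = tm k Q M 1 m := by
  obtain ⟨z, rfl⟩ := Submodule.Quotient.mk_surjective _ x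
  induction z using TensorProduct.induction_on with
  | zero =>
    exact ⟨0, fun w v _ => ⟨0, by rw [tm_zero, Submodule.Quotient.mk_zero, smul_zero]⟩⟩
  | tmul l m =>
    obtain ⟨n, hn⟩ := claimA k Q l
    refine ⟨n, fun w v h => ?_⟩
    obtain ⟨y, hy⟩ := hn w v h
    refine ⟨y • m, ?_⟩
    rw [← tm_bal, ← hy, ← tm_smul]
    rfl
  | add a b h1 h2 =>
    obtain ⟨n, hn⟩ := h1
    obtain ⟨n', hn'⟩ := h2
    refine ⟨max n n', fun w v h => ?_⟩
    obtain ⟨x, hx⟩ := hn w v (h.imp (fun h => le_trans (le_max_left _ _) h) id)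
    obtain ⟨y, hy⟩ := hn' w v (h.imp (fun h => le_trans (le_max_right _ _) h) id)
    refine ⟨x + y, ?_⟩
    rw [Submodule.Quotient.mk_add, smul_add, hx, hy, tm_add]

theorem flat_aux : RightFlat (PathAlg k Q.rev) (Leavitt k Q) (revToLeavitt k Q).toRingHom := by
  intro M N _ _ _ _ f hf
  let _ : Module k N := Module.compHom N (algebraMap k (PathAlg k Q.rev))
  have : IsScalarTower k (PathAlg k Q.rev) N := ⟨fun c a m => by
    rw [Algebra.smul_def, mul_smul]; rfl⟩
  rw [injective_iff_map_eq_zero]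
  intro x hx
  obtain ⟨n, hn⟩ := tm_claimA k Q M x
  refine claimB k Q _ n x fun w v h => ?_
  obtain ⟨m, hm⟩ := hn w v h
  have h1 : tm k Q N 1 (f m) = 0 := by
    have : tmap _ _ _ f (tm k Q M 1 m) = tm k Q N 1 (f m) := rfl
    rw [← this, ← hm, map_smul, hx, smul_zero]
  obtain ⟨n', hn'⟩ := claimC k Q N (f m) ((Submodule.Quotient.mk_eq_zero _).1 h1)
  rw [hm]
  refine claimB k Q _ n' _ fun w' v' h' => ?_
  rw [tm_smul, mul_one, ← rev_pw, ← rev_p, ← map_mul, tm_bal]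
  have h2 : (rp k Q v' * pw k Q w') • m = 0 := hf (by
    rw [map_smul, map_zero]; exact hn' w' v' h')
  rw [h2, tm_zero]

end Flat

end LPA

open LPA in
/-- The inclusion `P_k(Ē) ↪ L_k(E)` is a flat epimorphic left ring of quotients:
it is an epimorphism in the category of rings, and `L_k(E)` is flat as a right
`P_k(Ē)`-module. -/
theorem statement_9 (k : Type) [Field k] (Q : FinQuiver) :
    (∀ (T : Type) [Ring T] (g₁ g₂ : Leavitt k Q →+* T),
      g₁.comp (revToLeavitt k Q).toRingHom = g₂.comp (revToLeavitt k Q).toRingHom →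
        g₁ = g₂) ∧
    RightFlat (PathAlg k Q.rev) (Leavitt k Q) (revToLeavitt k Q).toRingHom := by
  exact ⟨fun T _ g₁ g₂ h => epi_aux k Q T g₁ g₂ h, flat_aux k Q⟩
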